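/- Let q ∈ ℂ with 0 < |q| < 1, let p be a positive integer, and let y ∈ ℂ with y ≠ 0. Assume the family (i,j) ↦ τ_p(j-i) τ(i-j) y^{i-j} q^{ij} / ((q;q)_i (q;q)_j) indexed by ℕ×ℕ is absolutely summable. Then ∑_{i,j≥0} τ_p(j-i) τ(i-j) y^{i-j} q^{ij} / ((q;q)_i (q;q)_j) = (-q/y; q^{p+1})_∞ · (-q^p y; q^{p+1})_∞ · (q^{p+1}; q^{p+1})_∞ / (q;q)_∞. -/

import Mathlib

/-- The finite q-shifted factorial with base `Q`: `(a;Q)_n = ∏_{k=0}^{n-1} (1 - a Q^k)`. -/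
noncomputable def qPoch (a q : ℂ) (n : ℕ) : ℂ := ∏ k ∈ Finset.range n, (1 - a * q ^ k)

/-- The infinite q-shifted factorial `(a;Q)_∞ = ∏_{k=0}^{∞} (1 - a Q^k)`. -/
noncomputable def qPochInf (a q : ℂ) : ℂ := ∏' k : ℕ, (1 - a * q ^ k)

/-- `τ(n) = (-1)^n q^{n(n-1)/2}` for `n : ℤ`. -/
noncomputable def qTauZ (q : ℂ) (n : ℤ) : ℂ := (-1 : ℂ) ^ n * q ^ ((n * (n - 1)) / 2).toNat

/-- `τ_p(n) = (-1)^n q^{p·n(n-1)/2}` for `n : ℤ`. -/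
noncomputable def qTauP (q : ℂ) (p : ℕ) (n : ℤ) : ℂ :=
  (-1 : ℂ) ^ n * q ^ (p * ((n * (n - 1)) / 2).toNat)

/-!
With `n = i - j`, the product `τ_p(-n) τ(n) y^n` is the `n`-th term of the theta series with base
`q^(p+1)` and argument `-q^p y`, so the numerator of the double series depends on `(i, j)` only
through `n` and the factor `q^(ij)`. By Cauchy's identity
`∑ m, q^(m(m+k)) / ((q;q)_m (q;q)_(m+k)) = 1 / (q;q)_∞`, whose value does not depend on `k`, every
diagonal contributes the same factor, and the double series is the theta series over `(q;q)_∞`.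
The Jacobi triple product evaluates the theta series. It comes from the same resummation: multiply
Euler's expansions of `(z;q)_∞` and `(q/z;q)_∞` and use `τ(i) τ(j) q^j = τ(i-j) q^(ij)`. Euler's
and Cauchy's identities are limits of finite sums over `i + j = N`, evaluated by induction on `N`.
-/

open Finset Filter Topology

section Tau

lemma two_mul_toNat_mul_pred_ediv_two (n : ℤ) :
    2 * ((n * (n - 1) / 2).toNat : ℤ) = n * (n - 1) := by
  have h_nonneg : 0 ≤ n * (n - 1) := by
    rcases le_or_gt n 0 with h | h
    · nlinarith
    · exact mul_nonneg h.le (by omega)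
  have h_dvd : 2 ∣ n * (n - 1) := (Int.even_mul_pred_self n).two_dvd
  omega

lemma qTauZ_zero (q : ℂ) : qTauZ q 0 = 1 := by simp [qTauZ]

lemma qTauZ_natCast_succ (q : ℂ) (k : ℕ) : qTauZ q (k + 1 : ℕ) = -q ^ k * qTauZ q k := by
  have h_exp : (((k + 1 : ℕ) : ℤ) * ((k + 1 : ℕ) - 1) / 2).toNat
      = k + ((k : ℤ) * (k - 1) / 2).toNat := by
    have h₁ := two_mul_toNat_mul_pred_ediv_two (k + 1 : ℕ)
    have h₀ := two_mul_toNat_mul_pred_ediv_two k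
    zify
    push_cast at h₁ ⊢
    linarith
  rw [qTauZ, qTauZ, h_exp, zpow_natCast, zpow_natCast]
  ring

lemma qTauZ_natCast_mul_qTauZ_natCast (q : ℂ) (i j : ℕ) :
    qTauZ q i * qTauZ q j * q ^ j = qTauZ q (i - j) * q ^ (i * j) := by
  have h_exp : ((i : ℤ) * (i - 1) / 2).toNat + ((j : ℤ) * (j - 1) / 2).toNat + j
      = (((i : ℤ) - j) * (i - j - 1) / 2).toNat + i * j := by
    have hi := two_mul_toNat_mul_pred_ediv_two i
    have hj := two_mul_toNat_mul_pred_ediv_two j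
    have hij := two_mul_toNat_mul_pred_ediv_two (i - j)
    zify
    linarith
  have h_sign : (-1 : ℂ) ^ ((i : ℤ) - j) = (-1) ^ (i : ℤ) * (-1) ^ (j : ℤ) := by
    rw [zpow_sub₀ (by norm_num), div_eq_mul_inv, ← inv_zpow, inv_neg_one]
  have h_pow := congrArg (q ^ ·) h_exp
  simp only [pow_add] at h_pow
  rw [qTauZ, qTauZ, qTauZ, h_sign]
  linear_combination (-1 : ℂ) ^ (i : ℤ) * (-1) ^ (j : ℤ) * h_pow

lemma qTauZ_neg {q : ℂ} (hq : q ≠ 0) (n : ℤ) : qTauZ q (-n) = q ^ n * qTauZ q n := by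
  have h_exp : ((-n * (-n - 1) / 2).toNat : ℤ) = n + (n * (n - 1) / 2).toNat := by
    have h_neg := two_mul_toNat_mul_pred_ediv_two (-n)
    have h_pos := two_mul_toNat_mul_pred_ediv_two n
    linarith
  rw [qTauZ, qTauZ, ← zpow_natCast, h_exp, zpow_add₀ hq, zpow_natCast, zpow_neg, ← inv_zpow,
    inv_neg_one]
  ring

lemma qTauP_eq_qTauZ (q : ℂ) (p : ℕ) (n : ℤ) : qTauP q p n = qTauZ (q ^ p) n := by
  rw [qTauP, qTauZ, pow_mul]

lemma qTauZ_mul_qTauZ (q r : ℂ) (n : ℤ) :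
    qTauZ q n * qTauZ r n = (-1) ^ n * qTauZ (q * r) n := by
  simp only [qTauZ, mul_pow]
  ring

lemma qTauP_neg_mul_qTauZ_mul_zpow {q : ℂ} (hq : q ≠ 0) (p : ℕ) (y : ℂ) (n : ℤ) :
    qTauP q p (-n) * qTauZ q n * y ^ n = qTauZ (q ^ (p + 1)) n * (-q ^ p * y) ^ n := by
  rw [qTauP_eq_qTauZ, qTauZ_neg (pow_ne_zero p hq), mul_assoc ((q ^ p) ^ n), qTauZ_mul_qTauZ,
    ← pow_succ, mul_zpow, neg_eq_neg_one_mul (q ^ p), mul_zpow]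
  ring

end Tau

section FiniteIdentities

lemma qPoch_zero (a q : ℂ) : qPoch a q 0 = 1 := prod_range_zero _

lemma qPoch_succ (a q : ℂ) (n : ℕ) : qPoch a q (n + 1) = qPoch a q n * (1 - a * q ^ n) :=
  prod_range_succ _ n

lemma qPoch_self_succ (q : ℂ) (n : ℕ) : qPoch q q (n + 1) = qPoch q q n * (1 - q ^ (n + 1)) := by
  rw [qPoch_succ, pow_succ']

variable {q : ℂ}

lemma one_sub_pow_succ_ne_zero (hq : ∀ n, qPoch q q n ≠ 0) (n : ℕ) : 1 - q ^ (n + 1) ≠ 0 :=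
  right_ne_zero_of_mul (qPoch_self_succ q n ▸ hq (n + 1))

lemma one_sub_pow_succ_div_qPoch (hq : ∀ n, qPoch q q n ≠ 0) (n : ℕ) :
    (1 - q ^ (n + 1)) / qPoch q q (n + 1) = 1 / qPoch q q n := by
  rw [qPoch_self_succ, div_mul_cancel_right₀ (one_sub_pow_succ_ne_zero hq n), one_div]

-- The q-analogue of the Leibniz rule: `1 - q^(i+j) = (1 - q^j) + (1 - q^i) q^j`, and each factor
-- `1 - q^k` lowers the index of `1 / (q;q)_k`.
lemma one_sub_pow_mul_sum_antidiagonal_succ (hq : ∀ n, qPoch q q n ≠ 0) (c : ℕ → ℂ) (N : ℕ) :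
    (1 - q ^ (N + 1)) * ∑ k ∈ antidiagonal (N + 1), c k.1 / (qPoch q q k.1 * qPoch q q k.2)
      = ∑ k ∈ antidiagonal N,
          (c k.1 + c (k.1 + 1) * q ^ k.2) / (qPoch q q k.1 * qPoch q q k.2) := by
  have h_split : (1 - q ^ (N + 1)) *
        ∑ k ∈ antidiagonal (N + 1), c k.1 / (qPoch q q k.1 * qPoch q q k.2)
      = ∑ k ∈ antidiagonal (N + 1), c k.1 / qPoch q q k.1 * ((1 - q ^ k.2) / qPoch q q k.2)
      + ∑ k ∈ antidiagonal (N + 1),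
          c k.1 * ((1 - q ^ k.1) / qPoch q q k.1) * (q ^ k.2 / qPoch q q k.2) := by
    rw [mul_sum, ← sum_add_distrib]
    refine sum_congr rfl fun k hk => ?_
    rw [← mem_antidiagonal.mp hk]
    ring
  rw [h_split, Nat.sum_antidiagonal_succ', Nat.sum_antidiagonal_succ]
  simp only [one_sub_pow_succ_div_qPoch hq, pow_zero, sub_self, zero_div, zero_mul, mul_zero,
    zero_add, ← sum_add_distrib]
  refine sum_congr rfl fun k _ => ?_
  ring

theorem q_binomial_theorem (hq : ∀ n, qPoch q q n ≠ 0) (z : ℂ) (N : ℕ) :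
    ∑ k ∈ antidiagonal N, qTauZ q k.1 * z ^ k.1 / (qPoch q q k.1 * qPoch q q k.2)
      = qPoch z q N / qPoch q q N := by
  induction N with
  | zero => simp [qPoch_zero, qTauZ_zero]
  | succ N ih =>
    apply mul_left_cancel₀ (one_sub_pow_succ_ne_zero hq N)
    calc (1 - q ^ (N + 1)) * ∑ k ∈ antidiagonal (N + 1),
            qTauZ q k.1 * z ^ k.1 / (qPoch q q k.1 * qPoch q q k.2)
        = ∑ k ∈ antidiagonal N, (1 - z * q ^ N) *
            (qTauZ q k.1 * z ^ k.1 / (qPoch q q k.1 * qPoch q q k.2)) := by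
          rw [one_sub_pow_mul_sum_antidiagonal_succ hq fun k => qTauZ q k * z ^ k]
          refine sum_congr rfl fun k hk => ?_
          rw [qTauZ_natCast_succ, ← mem_antidiagonal.mp hk]
          ring
      _ = (1 - z * q ^ N) * (qPoch z q N / qPoch q q N) := by rw [← mul_sum, ih]
      _ = (1 - q ^ (N + 1)) * (qPoch z q (N + 1) / qPoch q q (N + 1)) := by
          rw [mul_div_left_comm (1 - q ^ (N + 1)), one_sub_pow_succ_div_qPoch hq, qPoch_succ]
          ring

theorem sum_antidiagonal_pow_div_qPoch (hq : ∀ n, qPoch q q n ≠ 0) (N n : ℕ) :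
    ∑ k ∈ antidiagonal N,
        q ^ (k.1 * (k.1 + n)) / qPoch q q (k.1 + n) / (qPoch q q k.1 * qPoch q q k.2)
      = 1 / (qPoch q q N * qPoch q q (N + n)) := by
  induction N generalizing n with
  | zero => simp [qPoch_zero]
  | succ N ih =>
    apply mul_left_cancel₀ (one_sub_pow_succ_ne_zero hq N)
    calc (1 - q ^ (N + 1)) * ∑ k ∈ antidiagonal (N + 1),
            q ^ (k.1 * (k.1 + n)) / qPoch q q (k.1 + n) / (qPoch q q k.1 * qPoch q q k.2)
        = ∑ k ∈ antidiagonal N,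
            q ^ (k.1 * (k.1 + n)) / qPoch q q (k.1 + n) / (qPoch q q k.1 * qPoch q q k.2)
          + q ^ (N + n + 1) * ∑ k ∈ antidiagonal N, q ^ (k.1 * (k.1 + (n + 1))) /
            qPoch q q (k.1 + (n + 1)) / (qPoch q q k.1 * qPoch q q k.2) := by
          rw [one_sub_pow_mul_sum_antidiagonal_succ hq
            fun k => q ^ (k * (k + n)) / qPoch q q (k + n), mul_sum, ← sum_add_distrib]
          refine sum_congr rfl fun k hk => ?_
          rw [← mem_antidiagonal.mp hk, add_right_comm k.1 1 n, add_assoc k.1 n 1]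
          ring
      _ = 1 / qPoch q q N * (1 / qPoch q q (N + n) + q ^ (N + n + 1) / qPoch q q (N + n + 1)) := by
          rw [ih, ih, ← add_assoc]
          ring
      _ = 1 / qPoch q q N * (1 / qPoch q q (N + n + 1)) := by
          rw [← one_sub_pow_succ_div_qPoch hq (N + n)]
          ring
      _ = (1 - q ^ (N + 1)) * (1 / (qPoch q q (N + 1) * qPoch q q (N + 1 + n))) := by
          rw [← one_sub_pow_succ_div_qPoch hq N, add_right_comm]
          ring

end FiniteIdentities

lemma tendsto_sum_antidiagonal_mul {R : Type*} [NormedRing R] [CompleteSpace R] {f a : ℕ → R}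
    {l : R} (hf : Summable fun k => ‖f k‖) (ha : Tendsto a atTop (𝓝 l)) :
    Tendsto (fun N => ∑ k ∈ antidiagonal N, f k.1 * a k.2) atTop (𝓝 ((∑' k, f k) * l)) := by
  obtain ⟨C, hC⟩ : ∃ C, ∀ k, ‖a k‖ ≤ C := by
    obtain ⟨C, hC⟩ := ha.norm.bddAbove_range
    exact ⟨C, fun k => hC ⟨k, rfl⟩⟩
  have h_tsum (N : ℕ) : ∑' k, (if k ≤ N then f k * a (N - k) else 0)
      = ∑ k ∈ antidiagonal N, f k.1 * a k.2 := by
    rw [Nat.sum_antidiagonal_eq_sum_range_succ (fun i j => f i * a j),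
      tsum_eq_sum (s := range (N + 1)) (by grind)]
    exact sum_congr rfl (by grind)
  simp_rw [← h_tsum, ← hf.of_norm.tsum_mul_right]
  refine tendsto_tsum_of_dominated_convergence (hf.mul_right C) (fun k => ?_)
    (Eventually.of_forall fun N k => ?_)
  · refine ((ha.comp (tendsto_sub_atTop_nat k)).const_mul (f k)).congr' ?_
    filter_upwards [eventually_ge_atTop k] with N hN
    rw [if_pos hN, Function.comp_apply]
  · split_ifs
    · exact (norm_mul_le _ _).trans (by gcongr; exact hC _)
    · rw [norm_zero]
      exact mul_nonneg (norm_nonneg _) ((norm_nonneg _).trans (hC 0))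

section InfiniteIdentities

variable {q : ℂ}

lemma summable_norm_neg_mul_pow (hq : ‖q‖ < 1) (a : ℂ) :
    Summable fun k : ℕ => ‖-(a * q ^ k)‖ := by
  simpa only [norm_neg] using ((summable_geometric_of_norm_lt_one hq).mul_left a).norm

lemma tendsto_qPoch (hq : ‖q‖ < 1) (a : ℂ) :
    Tendsto (qPoch a q) atTop (𝓝 (qPochInf a q)) := by
  have h := (multipliable_one_add_of_summable
    (summable_norm_neg_mul_pow hq a)).tendsto_prod_tprod_nat
  simpa only [← sub_eq_add_neg] using! h

lemma one_sub_self_mul_pow_ne_zero (hq : ‖q‖ < 1) (n : ℕ) : 1 - q * q ^ n ≠ 0 := by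
  rw [← pow_succ', sub_ne_zero]
  intro h
  have h_lt : ‖q ^ (n + 1)‖ < 1 := by
    rw [norm_pow]
    exact pow_lt_one₀ (norm_nonneg q) hq n.succ_ne_zero
  rw [← h, norm_one] at h_lt
  exact h_lt.false

lemma qPoch_self_ne_zero (hq : ‖q‖ < 1) (n : ℕ) : qPoch q q n ≠ 0 :=
  prod_ne_zero_iff.mpr fun k _ => one_sub_self_mul_pow_ne_zero hq k

lemma qPochInf_self_ne_zero (hq : ‖q‖ < 1) : qPochInf q q ≠ 0 := by
  have h := tprod_one_add_ne_zero_of_summable (f := fun k => -(q * q ^ k))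
    (fun k => by simpa only [← sub_eq_add_neg] using one_sub_self_mul_pow_ne_zero hq k)
    (summable_norm_neg_mul_pow hq q)
  simpa only [← sub_eq_add_neg] using! h

lemma tendsto_inv_qPoch_self (hq : ‖q‖ < 1) :
    Tendsto (fun n => (qPoch q q n)⁻¹) atTop (𝓝 (qPochInf q q)⁻¹) :=
  (tendsto_qPoch hq q).inv₀ (qPochInf_self_ne_zero hq)

lemma summable_norm_div_qPoch {c : ℕ → ℂ} (hq : ‖q‖ < 1) (hc : Summable fun k => ‖c k‖) (n : ℕ) :
    Summable fun k => ‖c k / qPoch q q (k + n)‖ := by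
  have h_lim := (tendsto_inv_qPoch_self hq).comp (tendsto_add_atTop_nat n)
  rw [← Nat.cofinite_eq_atTop] at h_lim
  exact (hc.mul_tendsto_const h_lim).norm

lemma hasSum_div_qPoch_of_tendsto {c : ℕ → ℂ} {S : ℂ} (hq : ‖q‖ < 1)
    (hc : Summable fun k => ‖c k‖)
    (h : Tendsto (fun N => ∑ k ∈ antidiagonal N, c k.1 / (qPoch q q k.1 * qPoch q q k.2)) atTop
      (𝓝 (S / qPochInf q q))) :
    HasSum (fun k => c k / qPoch q q k) S := by
  have h_summable := summable_norm_div_qPoch hq hc 0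
  have h_lim := tendsto_sum_antidiagonal_mul h_summable (tendsto_inv_qPoch_self hq)
  simp only [add_zero, ← div_eq_mul_inv, div_div] at h_lim
  have h_tsum : ∑' k, c k / qPoch q q k = S :=
    (div_left_inj' (qPochInf_self_ne_zero hq)).mp (tendsto_nhds_unique h_lim h)
  exact h_tsum ▸ h_summable.of_norm.hasSum

lemma summable_norm_qTauZ_mul_pow (hq : ‖q‖ < 1) (z : ℂ) :
    Summable fun k : ℕ => ‖qTauZ q k * z ^ k‖ := by
  have h_ratio : Tendsto (fun k : ℕ => ‖q ^ k * z‖) atTop (𝓝 0) := by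
    simpa only [zero_mul, norm_zero] using
      ((tendsto_pow_atTop_nhds_zero_of_norm_lt_one hq).mul_const z).norm
  refine Summable.norm (summable_of_ratio_norm_eventually_le one_half_lt_one ?_)
  filter_upwards [h_ratio.eventually_le_const one_half_pos] with k hk
  calc ‖qTauZ q (k + 1 : ℕ) * z ^ (k + 1)‖ = ‖q ^ k * z‖ * ‖qTauZ q k * z ^ k‖ := by
        rw [qTauZ_natCast_succ, ← norm_mul, ← norm_neg (q ^ k * z * _)]
        congr 1
        ring
    _ ≤ 1 / 2 * ‖qTauZ q k * z ^ k‖ := by gcongr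

theorem hasSum_qTauZ_mul_pow_div_qPoch (hq : ‖q‖ < 1) (z : ℂ) :
    HasSum (fun k : ℕ => qTauZ q k * z ^ k / qPoch q q k) (qPochInf z q) := by
  refine hasSum_div_qPoch_of_tendsto hq (summable_norm_qTauZ_mul_pow hq z) ?_
  simp only [q_binomial_theorem (qPoch_self_ne_zero hq)]
  exact (tendsto_qPoch hq z).div (tendsto_qPoch hq q) (qPochInf_self_ne_zero hq)

theorem hasSum_pow_mul_add_div_qPoch (hq : ‖q‖ < 1) (n : ℕ) :
    HasSum (fun k => q ^ (k * (k + n)) / (qPoch q q k * qPoch q q (k + n)))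
      (qPochInf q q)⁻¹ := by
  have h_pow : Summable fun k => ‖q ^ (k * (k + n))‖ := by
    refine (summable_geometric_of_lt_one (norm_nonneg q) hq).of_nonneg_of_le
      (fun _ => norm_nonneg _) fun k => ?_
    rw [norm_pow]
    exact pow_le_pow_of_le_one (norm_nonneg q) hq.le (by nlinarith [Nat.le_mul_self k])
  simp only [mul_comm (qPoch q q _) (qPoch q q (_ + n)), ← div_div]
  refine hasSum_div_qPoch_of_tendsto hq (summable_norm_div_qPoch hq h_pow n) ?_
  simp only [sum_antidiagonal_pow_div_qPoch (qPoch_self_ne_zero hq), one_div, mul_inv]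
  rw [div_eq_mul_inv]
  exact (tendsto_inv_qPoch_self hq).mul
    ((tendsto_inv_qPoch_self hq).comp (tendsto_add_atTop_nat n))

end InfiniteIdentities

section JacobiTripleProduct

variable {q : ℂ}

/-- Diagonal coordinates on `ℕ × ℕ`: the pair `(n, m)` stands for the point at height `m` on the
diagonal `i - j = n`, that is `(i, j) = (m + n⁺, m + n⁻)`. It regroups double series by the
difference of their indices. -/
def diagonalEquiv : ℤ × ℕ ≃ ℕ × ℕ where
  toFun x := (x.2 + x.1.toNat, x.2 + (-x.1).toNat)
  invFun x := (x.1 - x.2, min x.1 x.2)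
  left_inv x := by ext <;> grind
  right_inv x := by ext <;> grind

lemma diagonalEquiv_fst_sub_snd (n : ℤ) (m : ℕ) :
    ((diagonalEquiv (n, m)).1 : ℤ) - (diagonalEquiv (n, m)).2 = n := by
  simp only [diagonalEquiv, Equiv.coe_fn_mk]
  omega

lemma hasSum_diagonal_pow_div_qPoch (hq : ‖q‖ < 1) (n : ℤ) :
    HasSum (fun m => q ^ ((diagonalEquiv (n, m)).1 * (diagonalEquiv (n, m)).2) /
      (qPoch q q (diagonalEquiv (n, m)).1 * qPoch q q (diagonalEquiv (n, m)).2))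
      (qPochInf q q)⁻¹ := by
  obtain ⟨k, rfl | rfl⟩ := n.eq_nat_or_neg
  · simpa [diagonalEquiv, mul_comm] using hasSum_pow_mul_add_div_qPoch hq k
  · simpa [diagonalEquiv] using hasSum_pow_mul_add_div_qPoch hq k

theorem hasSum_of_hasSum_diagonal {g : ℤ → ℂ} {S : ℂ} (hq : ‖q‖ < 1)
    (h : HasSum (fun x : ℕ × ℕ => g (x.1 - x.2) *
      (q ^ (x.1 * x.2) / (qPoch q q x.1 * qPoch q q x.2))) S) :
    HasSum g (S * qPochInf q q) := by
  have h_fiber := (diagonalEquiv.hasSum_iff.mpr h).prod_fiberwise fun n => by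
    simpa only [Function.comp_apply, diagonalEquiv_fst_sub_snd] using
      (hasSum_diagonal_pow_div_qPoch hq n).mul_left (g n)
  simpa only [inv_mul_cancel_right₀ (qPochInf_self_ne_zero hq)] using
    h_fiber.mul_right (qPochInf q q)

theorem hasSum_jacobi_triple_product {z : ℂ} (hq : ‖q‖ < 1) (hz : z ≠ 0) :
    HasSum (fun n : ℤ => qTauZ q n * z ^ n)
      (qPochInf z q * qPochInf (q / z) q * qPochInf q q) := by
  have h_term (i j : ℕ) : qTauZ q (i - j) * z ^ ((i : ℤ) - j) *
      (q ^ (i * j) / (qPoch q q i * qPoch q q j))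
      = qTauZ q i * z ^ i / qPoch q q i * (qTauZ q j * (q / z) ^ j / qPoch q q j) := by
    rw [zpow_sub₀ hz, zpow_natCast, zpow_natCast, div_pow]
    linear_combination -(z ^ i / z ^ j / (qPoch q q i * qPoch q q j)) *
      qTauZ_natCast_mul_qTauZ_natCast q i j
  have h_euler := hasSum_qTauZ_mul_pow_div_qPoch hq
  have h_summable := summable_mul_of_summable_norm
    (h_euler z).summable.norm (h_euler (q / z)).summable.norm
  have h_mul := (h_euler z).mul (h_euler (q / z)) h_summable
  exact hasSum_of_hasSum_diagonal hq (h_mul.congr_fun fun x => h_term x.1 x.2)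

end JacobiTripleProduct

theorem stmt11 (q : ℂ) (hq0 : 0 < ‖q‖) (hq1 : ‖q‖ < 1)
    (p : ℕ) (hp : 0 < p) (y : ℂ) (hy : y ≠ 0)
    (h1 : Summable (fun ij : ℕ × ℕ => ‖qTauP q p ((ij.2 : ℤ) - (ij.1 : ℤ)) *
      qTauZ q ((ij.1 : ℤ) - (ij.2 : ℤ)) * y ^ ((ij.1 : ℤ) - (ij.2 : ℤ)) *
      q ^ (ij.1 * ij.2) / (qPoch q q ij.1 * qPoch q q ij.2)‖)) :
    ∑' ij : ℕ × ℕ, qTauP q p ((ij.2 : ℤ) - (ij.1 : ℤ)) *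
      qTauZ q ((ij.1 : ℤ) - (ij.2 : ℤ)) * y ^ ((ij.1 : ℤ) - (ij.2 : ℤ)) *
      q ^ (ij.1 * ij.2) / (qPoch q q ij.1 * qPoch q q ij.2)
    = qPochInf (-q / y) (q ^ (p + 1)) * qPochInf (-q ^ p * y) (q ^ (p + 1)) *
      qPochInf (q ^ (p + 1)) (q ^ (p + 1)) / qPochInf q q := by
  have hq : q ≠ 0 := norm_pos_iff.mp hq0
  have hQ : ‖q ^ (p + 1)‖ < 1 := by
    rw [norm_pow]
    exact pow_lt_one₀ hq0.le hq1 p.succ_ne_zero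
  have hz : -q ^ p * y ≠ 0 := mul_ne_zero (neg_ne_zero.mpr (pow_ne_zero p hq)) hy
  have h_term (i j : ℕ) : qTauP q p (j - i) * qTauZ q (i - j) * y ^ ((i : ℤ) - j) *
      q ^ (i * j) / (qPoch q q i * qPoch q q j) = qTauZ (q ^ (p + 1)) (i - j) *
      (-q ^ p * y) ^ ((i : ℤ) - j) * (q ^ (i * j) / (qPoch q q i * qPoch q q j)) := by
    rw [← neg_sub (i : ℤ) j, qTauP_neg_mul_qTauZ_mul_zpow hq, mul_div_assoc]
  have h_sub : q ^ (p + 1) / (-q ^ p * y) = -q / y := by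
    rw [pow_succ, neg_mul, ← mul_neg, mul_div_mul_left _ _ (pow_ne_zero p hq), div_neg, neg_div]
  simp only [h_term] at h1 ⊢
  have h_diag := hasSum_of_hasSum_diagonal
    (g := fun n => qTauZ (q ^ (p + 1)) n * (-q ^ p * y) ^ n) hq1 h1.of_norm.hasSum
  have h_theta := hasSum_jacobi_triple_product hQ hz
  rw [eq_div_iff (qPochInf_self_ne_zero hq1), mul_comm (qPochInf (-q / y) _), ← h_sub]
  exact h_diag.unique h_theta
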